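/- (Monotonicity of ℰ_h.) Let h ≥ 0 with h ≠ 1, and let d₁, d₂ ∈ D_α satisfy 0 ≤ d₁ ≤ d₂. If h < 1, assume in addition that d₂ − d₁ ≠ 1 − 2α/π. Then ℰ_h(d₁) ≤ ℰ_h(d₂). -/

import Mathlib

/-!
The energy depends on a phase `φ` only through `|φ'|` and `cos φ`, so reflecting the part of the
line to the right of a multiple `πm` of `π`, i.e. replacing `φ` by `πm - |φ - πm|`, leaves the
energy unchanged, while it moves the limits at `±∞` and so lowers the winding number. The folded
phase has kinks, however. They are removed by composing `φ` with an odd map `flat`, which is the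
identity away from the multiples of `2π` (after translation by `πm`), has vanishing derivative at
those multiples, and has slope at most `1 + p` with `p` arbitrarily small. Near the fold the
potential is positive, since `cos (πm) ≠ k`, so the potential grows by a factor close to `1` as
well, and `cos ∘ flat` is a `(1 + p)`-Lipschitz function of `cos`, which controls the stray-field
energy (`exists_fold`, `energy_comp_le`). Letting the factor tend to `1` gives `fold_step`.

The rest is bookkeeping with `a = α/π`. Folding at the multiple of `π` that lies closest to one of
the two limits, on the side of the other limit, gives, for integers `n ≥ 0` and `h < 1`,
`n ≤ n + a ≤ n + 1` and `n ≤ n + 1 - a ≤ n + 1` at the level of `Einf`; the one comparison not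
obtained is that of `n + a` with `n + 1 - a`, whose difference `1 - 2a` is excluded. For `h > 1`
the winding numbers are integers, and folds at odd multiples of `π` suffice.
-/

open Real MeasureTheory Filter Topology
open scoped ENNReal NNReal

noncomputable section

/-- `k = min {h, 1}`. -/
def kparam (h : ℝ) : ℝ := min h 1

/-- `α = arccos k ∈ [0, π/2]`. -/
def alphaParam (h : ℝ) : ℝ := Real.arccos (kparam h)

/-- The anisotropy potential `W_h(θ) = (1/2)(cos²θ − 2h cos θ + 2hk − k²)`. -/
def Wpot (h θ : ℝ) : ℝ :=
  (1/2) * ((Real.cos θ)^2 - 2*h*Real.cos θ + 2*h*(kparam h) - (kparam h)^2)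

/-- The set `2πℤ + {−α, α}` of allowed limits at `±∞`. -/
def limSet (h : ℝ) : Set ℝ :=
  {y | ∃ n : ℤ, y = 2*Real.pi*n + alphaParam h ∨ y = 2*Real.pi*n - alphaParam h}

/-- The total energy `E_h(φ)`, valued in `[0, ∞]`:
exchange + anisotropy energy plus the stray-field (homogeneous `H^{1/2}`) energy. -/
def energy (h : ℝ) (φ : ℝ → ℝ) : ℝ≥0∞ :=
  ENNReal.ofReal (1/2) *
      (∫⁻ x : ℝ, ENNReal.ofReal ((deriv φ x)^2 + 2 * Wpot h (φ x))) +
    ENNReal.ofReal (1/(4*Real.pi)) *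
      (∫⁻ s : ℝ, ∫⁻ t : ℝ,
        ENNReal.ofReal ((Real.cos (φ s) - Real.cos (φ t))^2 / (s - t)^2))

/-- An admissible phase: `C¹`, limits at `±∞` in `2πℤ + {−α, α}`, finite energy. -/
def Admissible (h : ℝ) (φ : ℝ → ℝ) : Prop :=
  ContDiff ℝ 1 φ ∧
    (∃ L ∈ limSet h, Tendsto φ atTop (𝓝 L)) ∧
    (∃ L ∈ limSet h, Tendsto φ atBot (𝓝 L)) ∧
    energy h φ < ⊤

/-- The winding number `deg(φ) = (φ(+∞) − φ(−∞))/(2π)`. -/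
def deg (φ : ℝ → ℝ) : ℝ :=
  (limUnder atTop φ - limUnder atBot φ) / (2*Real.pi)

/-- `𝒜_h(d)`: admissible phases of winding number `d`. -/
def AA (h d : ℝ) : Set (ℝ → ℝ) := {φ | Admissible h φ ∧ deg φ = d}

/-- `ℰ_h(d) = inf {E_h(φ) : φ ∈ 𝒜_h(d)}`. -/
def Einf (h d : ℝ) : ℝ≥0∞ := ⨅ φ ∈ AA h d, energy h φ

/-- `D_α = {n + j·α/π : n ∈ ℤ, j ∈ {−1, 0, 1}}`. -/
def Dset (h : ℝ) : Set ℝ :=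
  {d | ∃ n j : ℤ, (j = -1 ∨ j = 0 ∨ j = 1) ∧ d = n + j * alphaParam h / Real.pi}

/-! ### Smoothing of the fold -/

/-- The rescaled height `((1 - cos θ)/η)^p`; it vanishes exactly on `2πℤ` and is at least `1`
off the arcs where `cos θ > 1 - η`. -/
def cutX (η p θ : ℝ) : ℝ := ((1 - Real.cos θ) / η) ^ p

/-- The positive part of `1 - cutX`, a cutoff supported near `2πℤ`. -/
def cutY (η p θ : ℝ) : ℝ := max 0 (1 - cutX η p θ)

/-- The reparametrisation `θ - sin θ · (1 - x)₊²` with `x = cutX`: it is the identity away from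
`2πℤ`, it fixes `2πℤ`, and its derivative vanishes there. -/
def flat (η p θ : ℝ) : ℝ := θ - Real.sin θ * (cutY η p θ) ^ 2

/-- The derivative of `flat`. -/
def flatD (η p θ : ℝ) : ℝ :=
  1 - Real.cos θ * (cutY η p θ) ^ 2
    + (1 + Real.cos θ) * (2 * p) * cutX η p θ * cutY η p θ

lemma cutX_nonneg {η p : ℝ} (hη : 0 < η) (θ : ℝ) : 0 ≤ cutX η p θ :=
  Real.rpow_nonneg (div_nonneg (by linarith [Real.cos_le_one θ]) hη.le) _

lemma cutY_nonneg (η p θ : ℝ) : 0 ≤ cutY η p θ := le_max_left _ _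

lemma cutY_le_one {η p : ℝ} (hη : 0 < η) (θ : ℝ) : cutY η p θ ≤ 1 :=
  max_le zero_le_one (by linarith [cutX_nonneg (p := p) hη θ])

lemma cutY_eq_zero {η p θ : ℝ} (hη : 0 < η) (hp : 0 < p) (hc : Real.cos θ ≤ 1 - η) :
    cutY η p θ = 0 := by
  refine max_eq_left ?_
  have : 1 ≤ cutX η p θ :=
    Real.one_le_rpow ((one_le_div hη).2 (by linarith)) hp.le
  linarith

lemma continuous_cutX {η p : ℝ} (hp : 0 < p) : Continuous (cutX η p) := by
  unfold cutX
  exact Continuous.rpow_const (by fun_prop) (fun _ => Or.inr hp.le)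

lemma continuous_cutY {η p : ℝ} (hp : 0 < p) : Continuous (cutY η p) :=
  continuous_const.max (continuous_const.sub (continuous_cutX hp))

lemma continuous_flatD {η p : ℝ} (hp : 0 < p) : Continuous (flatD η p) := by
  have h1 := continuous_cutX (η := η) hp
  have h2 := continuous_cutY (η := η) hp
  unfold flatD
  fun_prop

lemma hasDerivAt_max_sq (y : ℝ) :
    HasDerivAt (fun y : ℝ => (max 0 y) ^ 2) (2 * max 0 y) y := by
  rcases lt_trichotomy y 0 with hy | rfl | hy
  · rw [max_eq_left hy.le, mul_zero]
    refine (hasDerivAt_const y (0 : ℝ)).congr_of_eventuallyEq ?_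
    filter_upwards [gt_mem_nhds hy] with z hz
    simp [max_eq_left hz.le]
  · have : (fun y : ℝ => (max 0 y) ^ 2) =O[𝓝 0] fun y => ‖y - 0‖ ^ 2 := by
      refine Asymptotics.IsBigO.of_bound 1 (Eventually.of_forall fun y => ?_)
      rw [sub_zero, one_mul, norm_pow, norm_pow, norm_norm]
      refine pow_le_pow_left₀ (norm_nonneg _) ?_ 2
      rw [Real.norm_eq_abs, Real.norm_eq_abs, abs_of_nonneg (le_max_left 0 y)]
      exact max_le (abs_nonneg _) (le_abs_self _)
    have h3 : HasFDerivAt (fun y : ℝ => (max 0 y) ^ 2) (0 : ℝ →L[ℝ] ℝ) 0 :=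
      this.hasFDerivAt one_lt_two
    simpa using h3.hasDerivAt
  · rw [max_eq_right hy.le]
    have h3 : HasDerivAt (fun y : ℝ => y ^ 2) (2 * y) y := by simpa using hasDerivAt_pow 2 y
    refine h3.congr_of_eventuallyEq ?_
    filter_upwards [lt_mem_nhds hy] with z hz
    simp [max_eq_right hz.le]

lemma hasDerivAt_flat {η p : ℝ} (hη : 0 < η) (hp : 0 < p) (θ : ℝ) :
    HasDerivAt (flat η p) (flatD η p θ) θ := by
  by_cases hc : Real.cos θ = 1
  · -- `cutX` need not be differentiable here, but `sin θ = 0` and `cutY` is continuous.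
    have hs : Real.sin θ = 0 := by
      have := Real.sin_sq_add_cos_sq θ
      rw [hc] at this
      nlinarith
    have hX : cutX η p θ = 0 := by
      simp [cutX, hc, Real.zero_rpow hp.ne']
    have hY : cutY η p θ = 1 := by simp [cutY, hX]
    have key : HasDerivAt (fun t => Real.sin t * (cutY η p t) ^ 2) 1 θ := by
      rw [hasDerivAt_iff_tendsto_slope]
      have h1 := (hasDerivAt_iff_tendsto_slope.1 (Real.hasDerivAt_sin θ))
      have h2 : Tendsto (fun t => (cutY η p t) ^ 2) (𝓝[≠] θ) (𝓝 1) := by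
        have := ((continuous_cutY (η := η) hp).tendsto θ).pow 2
        rw [hY, one_pow] at this
        exact this.mono_left nhdsWithin_le_nhds
      have h3 := h1.mul h2
      rw [hc, one_mul] at h3
      refine h3.congr fun t => ?_
      simp only [slope_def_field, hs, zero_mul, sub_zero]
      ring
    have := (hasDerivAt_id θ).sub key
    refine this.congr_deriv ?_
    simp [flatD, hX, hY, hc]
  · have hc' : 0 < 1 - Real.cos θ := by
      have := lt_of_le_of_ne (Real.cos_le_one θ) hc
      linarith
    have hb : HasDerivAt (fun t => (1 - Real.cos t) / η) (Real.sin θ / η) θ := by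
      have := ((Real.hasDerivAt_cos θ).const_sub 1).div_const η
      simpa using this
    have hx := hb.rpow_const (p := p) (Or.inl (div_pos hc' hη).ne')
    have hy := (hasDerivAt_max_sq (1 - cutX η p θ)).comp θ (hx.const_sub 1)
    have := (hasDerivAt_id θ).sub ((Real.hasDerivAt_sin θ).mul hy)
    refine this.congr_deriv ?_
    have hpow : ((1 - Real.cos θ) / η) ^ (p - 1) = cutX η p θ / ((1 - Real.cos θ) / η) := by
      rw [Real.rpow_sub_one (div_pos hc' hη).ne', cutX]
    rw [hpow]
    have hsq : Real.sin θ * Real.sin θ = (1 - Real.cos θ) * (1 + Real.cos θ) := by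
      nlinarith [Real.sin_sq_add_cos_sq θ]
    have e : Real.sin θ * (2 * cutY η p θ * -(Real.sin θ / η * p *
        (cutX η p θ / ((1 - Real.cos θ) / η))))
        = -((1 + Real.cos θ) * (2 * p) * cutX η p θ * cutY η p θ) := by
      have : Real.sin θ * (2 * cutY η p θ * -(Real.sin θ / η * p *
        (cutX η p θ / ((1 - Real.cos θ) / η)))) = -((Real.sin θ * Real.sin θ) * (2 * p)
          * cutX η p θ * cutY η p θ / (1 - Real.cos θ)) := by
        field_simp
      rw [this, hsq]
      field_simp
    have e' : max 0 (1 - cutX η p θ) = cutY η p θ := rfl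
    simp only [Function.comp_apply, flatD, e', e]
    change 1 - (Real.cos θ * (cutY η p θ) ^ 2 + _) = _
    ring

lemma flatD_nonneg {η p : ℝ} (hη : 0 < η) (hp : 0 < p) (θ : ℝ) : 0 ≤ flatD η p θ := by
  have hY0 := cutY_nonneg η p θ
  have hY1 := cutY_le_one (p := p) hη θ
  have hX := cutX_nonneg (p := p) hη θ
  have h1 : 0 ≤ 1 + Real.cos θ := by linarith [Real.neg_one_le_cos θ]
  have h2 : 0 ≤ (1 + Real.cos θ) * (2 * p) * cutX η p θ * cutY η p θ := by positivity
  have h3 : Real.cos θ * (cutY η p θ) ^ 2 ≤ 1 := by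
    have : (cutY η p θ) ^ 2 ≤ 1 := pow_le_one₀ hY0 hY1
    nlinarith [Real.cos_le_one θ, sq_nonneg (cutY η p θ)]
  unfold flatD
  linarith

/-- The slope never exceeds `1 + p`: this is what the small exponent `p` buys. -/
lemma flatD_le {η p : ℝ} (hη : 0 < η) (hη1 : η ≤ 1) (hp : 0 < p) (θ : ℝ) :
    flatD η p θ ≤ 1 + p := by
  rcases le_or_gt (Real.cos θ) (1 - η) with hc | hc
  · simp [flatD, cutY_eq_zero hη hp hc, hp.le]
  · have hX := cutX_nonneg (p := p) hη θ
    have hXY : cutX η p θ * cutY η p θ ≤ 1 / 4 := by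
      rcases le_total (1 - cutX η p θ) 0 with h | h
      · simp [cutY, max_eq_left h]
      · rw [cutY, max_eq_right h]
        nlinarith [sq_nonneg (cutX η p θ - 1 / 2)]
    have hXY0 : 0 ≤ cutX η p θ * cutY η p θ := mul_nonneg hX (cutY_nonneg _ _ _)
    have h3 : 0 ≤ Real.cos θ * (cutY η p θ) ^ 2 :=
      mul_nonneg (by linarith) (sq_nonneg _)
    have h4 : (1 + Real.cos θ) * (2 * p) * (cutX η p θ * cutY η p θ) ≤ (2 * (2 * p)) * (1 / 4) := by
      refine mul_le_mul ?_ hXY hXY0 (by positivity)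
      nlinarith [Real.cos_le_one θ]
    unfold flatD
    linarith

lemma flat_eq_self {η p θ : ℝ} (hη : 0 < η) (hp : 0 < p) (hc : Real.cos θ ≤ 1 - η) :
    flat η p θ = θ := by
  simp [flat, cutY_eq_zero hη hp hc]

lemma flat_mem {η p θ : ℝ} (hη : 0 < η) (hθ : θ ∈ Set.Icc 0 Real.pi) :
    0 ≤ flat η p θ ∧ flat η p θ ≤ θ := by
  have hs := Real.sin_nonneg_of_mem_Icc hθ
  have hs' := Real.sin_le hθ.1
  have hY : (cutY η p θ) ^ 2 ≤ 1 := pow_le_one₀ (cutY_nonneg _ _ _) (cutY_le_one hη θ)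
  have hY0 := sq_nonneg (cutY η p θ)
  constructor <;> unfold flat <;> nlinarith

lemma cutY_congr {η p θ t : ℝ} (hc : Real.cos θ = Real.cos t) : cutY η p θ = cutY η p t := by
  simp [cutY, cutX, hc]

/-- `cos ∘ flat` depends on `θ` only through `cos θ`. -/
lemma cos_flat_arccos (η p θ : ℝ) :
    Real.cos (flat η p θ) = Real.cos (flat η p (Real.arccos (Real.cos θ))) := by
  have hc : Real.cos (Real.arccos (Real.cos θ)) = Real.cos θ :=
    Real.cos_arccos (Real.neg_one_le_cos θ) (Real.cos_le_one θ)
  have hs : Real.sin (Real.arccos (Real.cos θ)) = |Real.sin θ| := by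
    rw [Real.sin_arccos, ← Real.sin_sq, Real.sqrt_sq_eq_abs]
  simp only [flat, Real.cos_sub, hc, hs, cutY_congr hc]
  rcases abs_choice (Real.sin θ) with h | h <;> rw [h]
  rw [neg_mul (Real.sin θ), Real.cos_neg, Real.sin_neg]
  ring

lemma cos_le_cos_flat {η : ℝ} (hη : 0 < η) (p θ : ℝ) :
    Real.cos θ ≤ Real.cos (flat η p θ) := by
  rw [cos_flat_arccos]
  conv_lhs => rw [← Real.cos_arccos (Real.neg_one_le_cos θ) (Real.cos_le_one θ)]
  have h := flat_mem (p := p) hη ⟨Real.arccos_nonneg (Real.cos θ), Real.arccos_le_pi _⟩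
  exact Real.cos_le_cos_of_nonneg_of_le_pi h.1 (Real.arccos_le_pi _) h.2

/-- The horizontal field component changes in a `(1 + p)`-Lipschitz way, so the stray-field
energy grows by a factor `(1 + p)²` at most. -/
lemma cos_flat_lipschitz {η p : ℝ} (hη : 0 < η) (hη1 : η ≤ 1) (hp : 0 < p) (θ t : ℝ) :
    |Real.cos (flat η p θ) - Real.cos (flat η p t)| ≤ (1 + p) * |Real.cos θ - Real.cos t| := by
  have hd : ∀ x, HasDerivAt (fun x => Real.cos (flat η p x))
      (-Real.sin (flat η p x) * flatD η p x) x := fun x => (hasDerivAt_flat hη hp x).cos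
  have hsin : ∀ x ∈ Set.Icc 0 Real.pi,
      0 ≤ Real.sin (flat η p x) ∧ Real.sin (flat η p x) ≤ Real.sin x := by
    intro x hx
    have h := flat_mem (p := p) hη hx
    refine ⟨Real.sin_nonneg_of_nonneg_of_le_pi h.1 (h.2.trans hx.2), ?_⟩
    rcases le_or_gt (Real.cos x) (1 - η) with hc | hc
    · rw [flat_eq_self hη hp hc]
    · have hx2 : x ≤ Real.pi / 2 := by
        by_contra! hcon
        have := Real.cos_nonpos_of_pi_div_two_le_of_le hcon.le (by linarith [hx.2])
        linarith
      exact Real.sin_le_sin_of_le_of_le_pi_div_two (by linarith [h.1, Real.pi_pos]) hx2 h.2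
  have anti1 : AntitoneOn (fun x => Real.cos (flat η p x)) (Set.Icc 0 Real.pi) := by
    refine antitoneOn_of_deriv_nonpos (convex_Icc _ _)
      (fun x _ => (hd x).continuousAt.continuousWithinAt)
      (fun x _ => (hd x).differentiableAt.differentiableWithinAt) ?_
    intro x hx
    rw [(hd x).deriv]
    have := mul_nonneg (hsin x (interior_subset hx)).1 (flatD_nonneg hη hp x)
    linarith
  have anti2 : AntitoneOn (fun x => (1 + p) * Real.cos x - Real.cos (flat η p x))
      (Set.Icc 0 Real.pi) := by
    have hd2 : ∀ x, HasDerivAt (fun x => (1 + p) * Real.cos x - Real.cos (flat η p x))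
        ((1 + p) * (-Real.sin x) - -Real.sin (flat η p x) * flatD η p x) x :=
      fun x => ((Real.hasDerivAt_cos x).const_mul (1 + p)).sub (hd x)
    refine antitoneOn_of_deriv_nonpos (convex_Icc _ _)
      (fun x _ => (hd2 x).continuousAt.continuousWithinAt)
      (fun x _ => (hd2 x).differentiableAt.differentiableWithinAt) ?_
    intro x hx
    rw [(hd2 x).deriv]
    have h1 := hsin x (interior_subset hx)
    have h2 : Real.sin (flat η p x) * flatD η p x ≤ Real.sin x * (1 + p) :=
      mul_le_mul h1.2 (flatD_le hη hη1 hp x) (flatD_nonneg hη hp x) (h1.1.trans h1.2)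
    linarith
  have main : ∀ x ∈ Set.Icc 0 Real.pi, ∀ y ∈ Set.Icc 0 Real.pi, x ≤ y →
      |Real.cos (flat η p x) - Real.cos (flat η p y)| ≤ (1 + p) * |Real.cos x - Real.cos y| := by
    intro x hx y hy hxy
    have h1 := anti1 hx hy hxy
    have h2 := anti2 hx hy hxy
    have h3 := Real.cos_le_cos_of_nonneg_of_le_pi hx.1 hy.2 hxy
    simp only at h1 h2
    rw [abs_of_nonneg (by linarith), abs_of_nonneg (by linarith)]
    linarith
  have ha : ∀ z : ℝ, Real.arccos (Real.cos z) ∈ Set.Icc 0 Real.pi := fun z =>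
    ⟨Real.arccos_nonneg _, Real.arccos_le_pi _⟩
  have hcc : ∀ z : ℝ, Real.cos z = Real.cos (Real.arccos (Real.cos z)) := fun z =>
    (Real.cos_arccos (Real.neg_one_le_cos z) (Real.cos_le_one z)).symm
  rw [cos_flat_arccos η p θ, cos_flat_arccos η p t]
  conv_rhs => rw [hcc θ, hcc t]
  rcases le_total (Real.arccos (Real.cos θ)) (Real.arccos (Real.cos t)) with h | h
  · exact main _ (ha θ) _ (ha t) h
  · rw [abs_sub_comm, abs_sub_comm (Real.cos _) (Real.cos (Real.arccos (Real.cos t)))]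
    exact main _ (ha t) _ (ha θ) h

/-- The smoothed fold of the line at `0`: it sends `θ` to `-|θ|` away from `2πℤ`. -/
def foldZ (η p θ : ℝ) : ℝ := if θ ≤ 0 then flat η p θ else -flat η p θ

/-- The derivative of `foldZ`. -/
def foldD (η p θ : ℝ) : ℝ := if θ ≤ 0 then flatD η p θ else -flatD η p θ

lemma flatD_zero {η p : ℝ} (hp : 0 < p) : flatD η p 0 = 0 := by
  simp [flatD, cutY, cutX, Real.zero_rpow hp.ne']

lemma continuous_foldD {η p : ℝ} (hp : 0 < p) : Continuous (foldD η p) := by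
  refine Continuous.if_le (continuous_flatD hp) (continuous_flatD hp).neg continuous_id
    continuous_const ?_
  intro x hx
  rw [hx, flatD_zero hp, neg_zero]

lemma hasDerivAt_foldZ {η p : ℝ} (hη : 0 < η) (hp : 0 < p) (θ : ℝ) :
    HasDerivAt (foldZ η p) (foldD η p θ) θ := by
  have hd := hasDerivAt_flat hη hp θ
  rcases lt_trichotomy θ 0 with h | rfl | h
  · rw [foldD, if_pos h.le]
    refine hd.congr_of_eventuallyEq ?_
    filter_upwards [gt_mem_nhds h] with z hz
    simp [foldZ, hz.le]
  · rw [foldD, if_pos le_rfl]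
    rw [flatD_zero hp] at hd ⊢
    have hz : flat η p 0 = 0 := by simp [flat]
    rw [hasDerivAt_iff_isLittleO] at hd ⊢
    have hz' : foldZ η p 0 = 0 := by simp [foldZ, hz]
    simp only [hz, hz', smul_zero, sub_zero] at hd ⊢
    refine Asymptotics.IsLittleO.congr_left (f₁ := foldZ η p) ?_ (fun _ => rfl)
    rw [← Asymptotics.isLittleO_norm_left] at hd ⊢
    refine hd.congr_left fun x => ?_
    unfold foldZ
    split_ifs <;> simp
  · rw [foldD, if_neg h.not_ge]
    refine hd.neg.congr_of_eventuallyEq ?_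
    filter_upwards [lt_mem_nhds h] with z hz
    simp [foldZ, hz.not_ge]

lemma cos_foldZ (η p θ : ℝ) : Real.cos (foldZ η p θ) = Real.cos (flat η p θ) := by
  unfold foldZ
  split_ifs <;> simp

lemma foldD_sq_le {η p : ℝ} (hη : 0 < η) (hη1 : η ≤ 1) (hp : 0 < p) (θ : ℝ) :
    (foldD η p θ) ^ 2 ≤ (1 + p) ^ 2 := by
  have h : (foldD η p θ) ^ 2 = (flatD η p θ) ^ 2 := by
    unfold foldD
    split_ifs <;> simp
  rw [h]
  exact pow_le_pow_left₀ (flatD_nonneg hη hp θ) (flatD_le hη hη1 hp θ) 2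

lemma foldZ_eq {η p θ : ℝ} (hη : 0 < η) (hp : 0 < p) (hc : Real.cos θ ≤ 1 - η) :
    foldZ η p θ = -|θ| := by
  unfold foldZ
  rw [flat_eq_self hη hp hc]
  split_ifs with h
  · rw [abs_of_nonpos h, neg_neg]
  · rw [abs_of_pos (not_le.1 h)]

lemma Wpot_nonneg {h : ℝ} (θ : ℝ) : 0 ≤ Wpot h θ := by
  unfold Wpot kparam
  rcases le_total h 1 with h1 | h1
  · rw [min_eq_left h1]
    nlinarith [sq_nonneg (Real.cos θ - h)]
  · rw [min_eq_right h1]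
    nlinarith [Real.cos_le_one θ]

lemma kparam_le_one (h : ℝ) : kparam h ≤ 1 := min_le_right _ _

/-! ### The smoothed fold and the energy -/

/-- A fold of the line at `πm`, smoothed so as to raise each part of the energy by a factor at
most `K`. It is exact at the zeros of the potential, provided `πm` is not one of them. -/
lemma exists_fold {h : ℝ} (h0 : 0 ≤ h) (h1 : h ≠ 1) (m : ℤ)
    (hm : Real.cos (m * Real.pi) ≠ kparam h) {K : ℝ} (hK : 1 < K) :
    ∃ F F' : ℝ → ℝ, (∀ θ, HasDerivAt F (F' θ) θ) ∧ Continuous F' ∧ (∀ θ, (F' θ) ^ 2 ≤ K) ∧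
      (∀ θ, Wpot h (F θ) ≤ K * Wpot h θ) ∧
      (∀ θ t, (Real.cos (F θ) - Real.cos (F t)) ^ 2 ≤ K * (Real.cos θ - Real.cos t) ^ 2) ∧
      (∀ θ, Real.cos θ = kparam h → F θ = m * Real.pi - |θ - m * Real.pi|) := by
  set s := Real.cos (m * Real.pi) with hs
  have hs2 : s = 1 ∨ s = -1 := by
    have := Real.sin_sq_add_cos_sq (m * Real.pi)
    rw [Real.sin_int_mul_pi, ← hs] at this
    exact sq_eq_sq_iff_eq_or_eq_neg.1 (by linarith)
  have hss : s * s = 1 := by rcases hs2 with h | h <;> simp [h]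
  -- The potential as a polynomial in `c = cos (θ - πm) = s cos θ`.
  let w : ℝ → ℝ := fun c => (1/2) * ((s * c)^2 - 2*h*(s * c) + 2*h*(kparam h) - (kparam h)^2)
  have hw1 : 0 < w 1 := by
    have e : w 1 = (1/2) * ((s - kparam h) * (s + kparam h - 2 * h)) := by simp only [w]; ring
    rw [e]
    unfold kparam at hm ⊢
    rcases lt_or_gt_of_ne h1 with hh | hh
    · rw [min_eq_left hh.le] at hm ⊢
      have := sq_pos_of_ne_zero (sub_ne_zero.2 hm)
      nlinarith
    · rw [min_eq_right hh.le] at hm ⊢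
      rcases hs2 with h | h
      · exact absurd h hm
      · rw [h]; nlinarith
  have hcos : ∀ y, Real.cos (m * Real.pi + y) = s * Real.cos y := by
    intro y
    rw [Real.cos_add, Real.sin_int_mul_pi]; simp [hs]
  have hW : ∀ y, Wpot h (m * Real.pi + y) = w (Real.cos y) := by
    intro y
    simp only [Wpot, hcos, w]
  have hcont : Continuous (fun c : ℝ × ℝ => K * w c.1 - w c.2) := by
    simp only [w]; fun_prop
  have hev : ∀ᶠ c : ℝ × ℝ in 𝓝 (1, 1), 0 < K * w c.1 - w c.2 := by
    refine hcont.continuousAt.eventually (lt_mem_nhds ?_)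
    simp only
    nlinarith
  obtain ⟨ε, hε, hball⟩ := Metric.eventually_nhds_iff.1 hev
  have hk : s * kparam h < 1 := by
    have hk1 := kparam_le_one h
    rcases hs2 with h' | h'
    · rw [h', one_mul]
      exact lt_of_le_of_ne hk1 (fun e => hm (by rw [h', e]))
    · rw [h']
      have : 0 ≤ kparam h := le_min h0 zero_le_one
      linarith
  obtain ⟨η, hη, hη1, hηk, hηε⟩ : ∃ η : ℝ, 0 < η ∧ η ≤ 1 ∧ η ≤ 1 - s * kparam h ∧ η < ε :=
    ⟨min (min 1 (1 - s * kparam h)) (ε / 2),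
      lt_min (lt_min one_pos (by linarith)) (by linarith),
      (min_le_left _ _).trans (min_le_left _ _), (min_le_left _ _).trans (min_le_right _ _),
      (min_le_right _ _).trans_lt (by linarith)⟩
  obtain ⟨p, hp, hp1, hpK⟩ : ∃ p : ℝ, 0 < p ∧ p ≤ 1 ∧ p ≤ (K - 1) / 3 :=
    ⟨min 1 ((K - 1) / 3), lt_min one_pos (by linarith), min_le_left _ _, min_le_right _ _⟩
  have hpK2 : (1 + p) ^ 2 ≤ K := by nlinarith
  have hsub : ∀ θ, m * Real.pi + (θ - m * Real.pi) = θ := fun θ => by ring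
  have hcos' : ∀ θ, Real.cos θ = s * Real.cos (θ - m * Real.pi) := fun θ => by
    rw [← hcos, hsub]
  refine ⟨fun θ => m * Real.pi + foldZ η p (θ - m * Real.pi),
    fun θ => foldD η p (θ - m * Real.pi), ?_, ?_, ?_, ?_, ?_, ?_⟩
  · intro θ
    have := ((hasDerivAt_foldZ hη hp (θ - m * Real.pi)).comp_sub_const θ (m * Real.pi))
    exact this.const_add _
  · exact (continuous_foldD hp).comp (by fun_prop)
  · exact fun θ => (foldD_sq_le hη hη1 hp _).trans hpK2
  · intro θ
    have hn := Wpot_nonneg (h := h) θ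
    rcases le_or_gt (Real.cos (θ - m * Real.pi)) (1 - η) with hc | hc
    · rw [hW, cos_foldZ, flat_eq_self hη hp hc, ← hW, hsub]
      nlinarith
    · have hc2 := cos_le_cos_flat hη p (θ - m * Real.pi)
      have hc3 := Real.cos_le_one (flat η p (θ - m * Real.pi))
      have hb := @hball (Real.cos (θ - m * Real.pi), Real.cos (flat η p (θ - m * Real.pi))) (by
        rw [Prod.dist_eq, Real.dist_eq, Real.dist_eq]
        refine max_lt ?_ ?_ <;> simp only <;> rw [abs_lt] <;> constructor <;> linarith)
      rw [hW, cos_foldZ]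
      have e := hW (θ - m * Real.pi)
      rw [hsub] at e
      rw [e]
      simp only at hb
      linarith
  · intro θ t
    simp only
    rw [hcos, hcos, cos_foldZ, cos_foldZ, hcos' θ, hcos' t, ← mul_sub, ← mul_sub, mul_pow, mul_pow,
      sq s, hss, one_mul, one_mul]
    have := pow_le_pow_left₀ (abs_nonneg _)
      (cos_flat_lipschitz hη hη1 hp (θ - m * Real.pi) (t - m * Real.pi)) 2
    rw [mul_pow, sq_abs, sq_abs] at this
    exact this.trans (mul_le_mul_of_nonneg_right hpK2 (sq_nonneg _))
  · intro θ hθ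
    simp only
    have : Real.cos (θ - m * Real.pi) = s * kparam h := by
      rw [← hθ, hcos' θ, ← mul_assoc, hss, one_mul]
    rw [foldZ_eq hη hp (by linarith), ← sub_eq_add_neg]

lemma alphaParam_nonneg (h : ℝ) : 0 ≤ alphaParam h := Real.arccos_nonneg _

lemma kparam_nonneg {h : ℝ} (h0 : 0 ≤ h) : 0 ≤ kparam h := le_min h0 zero_le_one

lemma alphaParam_le {h : ℝ} (h0 : 0 ≤ h) : alphaParam h ≤ Real.pi / 2 :=
  Real.arccos_le_pi_div_two.2 (kparam_nonneg h0)

lemma cos_of_mem_limSet {h A : ℝ} (h0 : 0 ≤ h) (hA : A ∈ limSet h) :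
    Real.cos A = kparam h := by
  have hk : Real.cos (alphaParam h) = kparam h :=
    Real.cos_arccos (by linarith [kparam_nonneg h0]) (kparam_le_one h)
  obtain ⟨n, rfl | rfl⟩ := hA
  · rw [← hk, add_comm, mul_comm (2 * Real.pi), Real.cos_add_int_mul_two_pi]
  · rw [← hk, sub_eq_neg_add, mul_comm (2 * Real.pi), Real.cos_add_int_mul_two_pi, Real.cos_neg]

lemma reflect_mem_limSet {h A : ℝ} (m : ℤ) (hA : A ∈ limSet h) :
    2 * (m * Real.pi) - A ∈ limSet h := by
  obtain ⟨n, rfl | rfl⟩ := hA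
  · exact ⟨m - n, Or.inr (by push_cast; ring)⟩
  · exact ⟨m - n, Or.inl (by push_cast; ring)⟩

lemma neg_mem_limSet {h A : ℝ} (hA : A ∈ limSet h) : -A ∈ limSet h := by
  simpa using reflect_mem_limSet 0 hA

lemma fold_mem_limSet {h A : ℝ} (m : ℤ) (hA : A ∈ limSet h) :
    m * Real.pi - |A - m * Real.pi| ∈ limSet h := by
  rcases abs_choice (A - m * Real.pi) with e | e <;> rw [e]
  · have := reflect_mem_limSet m hA
    convert this using 1
    ring
  · convert hA using 1
    ring

lemma deg_eq {φ : ℝ → ℝ} {A B : ℝ} (hB : Tendsto φ atTop (𝓝 B)) (hA : Tendsto φ atBot (𝓝 A)) :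
    deg φ = (B - A) / (2 * Real.pi) := by
  rw [deg, hB.limUnder_eq, hA.limUnder_eq]

lemma energy_neg (h : ℝ) (φ : ℝ → ℝ) : energy h (fun x => -φ x) = energy h φ := by
  simp [energy, Wpot]

lemma Einf_neg_le (h d : ℝ) : Einf h (-d) ≤ Einf h d := by
  refine le_iInf₂ fun φ hφ => ?_
  obtain ⟨⟨hc, ⟨B, hB, hB'⟩, ⟨A, hA, hA'⟩, hE⟩, hd⟩ := hφ
  rw [← energy_neg]
  refine iInf₂_le _ ⟨⟨hc.neg, ⟨-B, neg_mem_limSet hB, hB'.neg⟩,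
    ⟨-A, neg_mem_limSet hA, hA'.neg⟩, by rwa [energy_neg]⟩, ?_⟩
  have e : (-B - -A) / (2 * Real.pi) = -((B - A) / (2 * Real.pi)) := by ring
  rw [deg_eq hB'.neg hA'.neg, ← hd, deg_eq hB' hA']
  exact e

/-- Composition with a map that satisfies the bounds of `exists_fold` raises the energy by a
factor at most `K`. -/
lemma energy_comp_le {h K : ℝ} (hK : 0 ≤ K) {F F' φ : ℝ → ℝ}
    (hF : ∀ θ, HasDerivAt F (F' θ) θ) (hF' : ∀ θ, (F' θ) ^ 2 ≤ K)
    (hW : ∀ θ, Wpot h (F θ) ≤ K * Wpot h θ)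
    (hcos : ∀ θ t, (Real.cos (F θ) - Real.cos (F t)) ^ 2 ≤ K * (Real.cos θ - Real.cos t) ^ 2)
    (hφ : Differentiable ℝ φ) :
    energy h (fun x => F (φ x)) ≤ ENNReal.ofReal K * energy h φ := by
  have e1 : (∫⁻ x : ℝ, ENNReal.ofReal ((deriv (fun x => F (φ x)) x)^2 + 2 * Wpot h (F (φ x))))
      ≤ ENNReal.ofReal K * ∫⁻ x : ℝ, ENNReal.ofReal ((deriv φ x)^2 + 2 * Wpot h (φ x)) := by
    rw [← lintegral_const_mul' _ _ ENNReal.ofReal_ne_top]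
    refine lintegral_mono fun x => ?_
    rw [← ENNReal.ofReal_mul hK]
    refine ENNReal.ofReal_le_ofReal ?_
    have hd : deriv (fun x => F (φ x)) x = F' (φ x) * deriv φ x :=
      ((hF (φ x)).comp x (hφ x).hasDerivAt).deriv
    rw [hd, mul_pow, mul_add]
    have := mul_le_mul_of_nonneg_right (hF' (φ x)) (sq_nonneg (deriv φ x))
    linarith [hW (φ x)]
  have e2 : (∫⁻ s : ℝ, ∫⁻ t : ℝ,
        ENNReal.ofReal ((Real.cos (F (φ s)) - Real.cos (F (φ t)))^2 / (s - t)^2))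
      ≤ ENNReal.ofReal K * ∫⁻ s : ℝ, ∫⁻ t : ℝ,
        ENNReal.ofReal ((Real.cos (φ s) - Real.cos (φ t))^2 / (s - t)^2) := by
    rw [← lintegral_const_mul' _ _ ENNReal.ofReal_ne_top]
    refine lintegral_mono fun s => ?_
    rw [← lintegral_const_mul' _ _ ENNReal.ofReal_ne_top]
    refine lintegral_mono fun t => ?_
    rw [← ENNReal.ofReal_mul hK]
    refine ENNReal.ofReal_le_ofReal ?_
    rw [← mul_div_assoc]
    exact div_le_div_of_nonneg_right (hcos _ _) (sq_nonneg _)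
  unfold energy
  rw [mul_add, mul_left_comm, mul_left_comm (ENNReal.ofReal K)]
  exact add_le_add (mul_le_mul_right e1 _) (mul_le_mul_right e2 _)

/-- Folding a phase at `πm` costs no energy in the limit of sharp folds. -/
lemma fold_step {h : ℝ} (h0 : 0 ≤ h) (h1 : h ≠ 1) {φ : ℝ → ℝ} {A B : ℝ} (hφ : Admissible h φ)
    (hA : A ∈ limSet h) (hB : B ∈ limSet h)
    (hA' : Tendsto φ atBot (𝓝 A)) (hB' : Tendsto φ atTop (𝓝 B)) (m : ℤ)
    (hm : Real.cos (m * Real.pi) ≠ kparam h) :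
    Einf h (((m * Real.pi - |B - m * Real.pi|) - (m * Real.pi - |A - m * Real.pi|))
      / (2 * Real.pi)) ≤ energy h φ := by
  have key : ∀ K : ℝ, 1 < K →
      Einf h (((m * Real.pi - |B - m * Real.pi|) - (m * Real.pi - |A - m * Real.pi|))
        / (2 * Real.pi)) ≤ ENNReal.ofReal K * energy h φ := by
    intro K hK
    obtain ⟨F, F', hF, hcF, hF', hW, hcos, hlim⟩ := exists_fold h0 h1 m hm hK
    have hdiff : Differentiable ℝ φ := hφ.1.differentiable one_ne_zero
    have hE := energy_comp_le (by linarith : (0 : ℝ) ≤ K) hF hF' hW hcos hdiff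
    have hFc : ContDiff ℝ 1 F := by
      refine contDiff_one_iff_deriv.2 ⟨fun x => (hF x).differentiableAt, ?_⟩
      rwa [show deriv F = F' from funext fun x => (hF x).deriv]
    have hB2 : Tendsto (fun x => F (φ x)) atTop (𝓝 (m * Real.pi - |B - m * Real.pi|)) := by
      rw [← hlim B (cos_of_mem_limSet h0 hB)]
      exact (hF B).continuousAt.tendsto.comp hB'
    have hA2 : Tendsto (fun x => F (φ x)) atBot (𝓝 (m * Real.pi - |A - m * Real.pi|)) := by
      rw [← hlim A (cos_of_mem_limSet h0 hA)]
      exact (hF A).continuousAt.tendsto.comp hA'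
    refine le_trans (iInf₂_le (fun x => F (φ x)) ⟨⟨hFc.comp hφ.1, ⟨_, fold_mem_limSet m hB, hB2⟩,
      ⟨_, fold_mem_limSet m hA, hA2⟩, ?_⟩, deg_eq hB2 hA2⟩) hE
    exact hE.trans_lt (ENNReal.mul_lt_top ENNReal.ofReal_lt_top hφ.2.2.2)
  have ht : Tendsto (fun K : ℝ => ENNReal.ofReal K * energy h φ) (𝓝[>] 1)
      (𝓝 (ENNReal.ofReal 1 * energy h φ)) :=
    ENNReal.Tendsto.mul_const ((ENNReal.continuous_ofReal.tendsto 1).mono_left nhdsWithin_le_nhds)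
      (Or.inl (by simp))
  rw [ENNReal.ofReal_one, one_mul] at ht
  refine ge_of_tendsto ht ?_
  filter_upwards [self_mem_nhdsWithin] with K hK using key K hK

lemma fold_right {h : ℝ} (h0 : 0 ≤ h) (h1 : h ≠ 1) {φ : ℝ → ℝ} {A B : ℝ} (hφ : Admissible h φ)
    (hA : A ∈ limSet h) (hB : B ∈ limSet h)
    (hA' : Tendsto φ atBot (𝓝 A)) (hB' : Tendsto φ atTop (𝓝 B)) (m : ℤ)
    (hm : Real.cos (m * Real.pi) ≠ kparam h) (hAm : A ≤ m * Real.pi) (hBm : m * Real.pi ≤ B)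
    {d : ℝ} (hd : 2 * (m * Real.pi) - B - A = 2 * Real.pi * d) :
    Einf h d ≤ energy h φ := by
  have := fold_step h0 h1 hφ hA hB hA' hB' m hm
  rw [abs_of_nonneg (by linarith), abs_of_nonpos (by linarith)] at this
  convert this using 2
  rw [eq_div_iff (by positivity)]
  linarith

/-- The result of folding is negated, so that the right end keeps its winding. -/
lemma fold_left {h : ℝ} (h0 : 0 ≤ h) (h1 : h ≠ 1) {φ : ℝ → ℝ} {A B : ℝ} (hφ : Admissible h φ)
    (hA : A ∈ limSet h) (hB : B ∈ limSet h)
    (hA' : Tendsto φ atBot (𝓝 A)) (hB' : Tendsto φ atTop (𝓝 B)) (m : ℤ)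
    (hm : Real.cos (m * Real.pi) ≠ kparam h) (hAm : A ≤ m * Real.pi) (hBm : m * Real.pi ≤ B)
    {d : ℝ} (hd : B + A - 2 * (m * Real.pi) = 2 * Real.pi * d) :
    Einf h d ≤ energy h φ := by
  have := fold_right h0 h1 hφ hA hB hA' hB' m hm hAm hBm (d := -d) (by linarith)
  have h2 := Einf_neg_le h (-d)
  rw [neg_neg] at h2
  exact h2.trans this

/-! ### Comparison of winding numbers -/

lemma cos_int_mul_pi_ne {h : ℝ} (h0 : 0 ≤ h) (h1 : h < 1) (m : ℤ) :
    Real.cos (m * Real.pi) ≠ kparam h := by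
  intro e
  have h2 := Real.sin_sq_add_cos_sq (m * Real.pi)
  rw [Real.sin_int_mul_pi, e, kparam, min_eq_left h1.le] at h2
  nlinarith

lemma cos_odd_mul_pi_ne {h : ℝ} (h0 : 0 ≤ h) (j : ℤ) :
    Real.cos ((2 * j - 1 : ℤ) * Real.pi) ≠ kparam h := by
  have : Real.cos ((2 * j - 1 : ℤ) * Real.pi) = -1 := by
    have e : ((2 * j - 1 : ℤ) : ℝ) * Real.pi = -Real.pi + j * (2 * Real.pi) := by
      push_cast; ring
    rw [e, Real.cos_add_int_mul_two_pi, Real.cos_neg, Real.cos_pi]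
  rw [this]
  linarith [kparam_nonneg h0]

/-- Lower bounds for `Einf` can be checked on the two ends: a phase of winding number `d` starts at `π(2i ± a)` and
ends at `π(2j ± a)`, where `a = α/π`. -/
lemma le_Einf_of_limits {h d a : ℝ} (ha : a * Real.pi = alphaParam h) {E : ℝ≥0∞}
    (H : ∀ φ : ℝ → ℝ, ∀ i j : ℤ, ∀ σ τ : ℝ, Admissible h φ → (σ = a ∨ σ = -a) →
      (τ = a ∨ τ = -a) → Tendsto φ atBot (𝓝 ((2 * i + σ) * Real.pi)) →
      Tendsto φ atTop (𝓝 ((2 * j + τ) * Real.pi)) → 2 * j + τ - (2 * i + σ) = 2 * d →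
      (2 * i + σ) * Real.pi ∈ limSet h → (2 * j + τ) * Real.pi ∈ limSet h →
      E ≤ energy h φ) : E ≤ Einf h d := by
  refine le_iInf₂ fun φ hφ => ?_
  obtain ⟨had, hd⟩ := hφ
  obtain ⟨B, hB, hB'⟩ := had.2.1
  obtain ⟨A, hA, hA'⟩ := had.2.2.1
  have rep : ∀ x ∈ limSet h, ∃ i : ℤ, ∃ σ : ℝ, (σ = a ∨ σ = -a) ∧ x = (2 * i + σ) * Real.pi := by
    rintro x ⟨n, e | e⟩
    · exact ⟨n, a, Or.inl rfl, by rw [e, ← ha]; ring⟩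
    · exact ⟨n, -a, Or.inr rfl, by rw [e, ← ha]; ring⟩
  obtain ⟨i, σ, hσ, rfl⟩ := rep A hA
  obtain ⟨j, τ, hτ, rfl⟩ := rep B hB
  refine H φ i j σ τ had hσ hτ hA' hB' ?_ hA hB
  rw [deg_eq hB' hA', div_eq_iff (by positivity)] at hd
  have := Real.pi_ne_zero
  apply mul_right_cancel₀ this
  linarith

lemma Einf_int_le_add {h a : ℝ} (h0 : 0 ≤ h) (h1 : h < 1) (ha : a * Real.pi = alphaParam h)
    (ha0 : 0 < a) (ha1 : a ≤ 1 / 2) (n : ℤ) (hn : 0 ≤ n) : Einf h n ≤ Einf h (n + a) := by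
  have hn' : (0 : ℝ) ≤ n := by exact_mod_cast hn
  have hpi := Real.pi_pos
  refine le_Einf_of_limits ha fun φ i j σ τ had hσ hτ hA hB hd hAm hBm => ?_
  have nint : ∀ z : ℤ, ¬ (0 < (z : ℝ) ∧ (z : ℝ) < 1) := fun z hz => by
    have h1 : 0 < z := by exact_mod_cast hz.1
    have h2 : z < 1 := by exact_mod_cast hz.2
    omega
  rcases hσ with rfl | rfl <;> rcases hτ with rfl | rfl
  · exact absurd ⟨by push_cast; linarith, by push_cast; linarith⟩ (nint (j - i - n))
  · have e : j - i - n = 1 := by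
      -- This case occurs only for `α = π/2`.
      have h1 : (0 : ℝ) < (j - i - n : ℤ) := by push_cast; linarith
      have h2 : ((j - i - n : ℤ) : ℝ) < 2 := by push_cast; linarith
      have h1' : 0 < j - i - n := by exact_mod_cast h1
      have h2' : j - i - n < 2 := by exact_mod_cast h2
      omega
    have e' : (j : ℝ) - i - n = 1 := by exact_mod_cast e
    refine fold_right h0 h1.ne had hAm hBm hA hB (2 * j - 1) (cos_int_mul_pi_ne h0 h1 _) ?_ ?_ ?_
    · gcongr; push_cast; linarith
    · gcongr; push_cast; linarith
    · push_cast; linear_combination (2 * Real.pi) * e'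
  · have e' : (j : ℝ) - i = n := by linarith
    refine fold_right h0 h1.ne had hAm hBm hA hB (2 * j) (cos_int_mul_pi_ne h0 h1 _) ?_ ?_ ?_
    · gcongr; push_cast; linarith
    · gcongr; push_cast; linarith
    · push_cast; linear_combination (2 * Real.pi) * e'
  · exact absurd ⟨by push_cast; linarith, by push_cast; linarith⟩ (nint (j - i - n))

lemma Einf_int_le_sub {h a : ℝ} (h0 : 0 ≤ h) (h1 : h < 1) (ha : a * Real.pi = alphaParam h)
    (ha0 : 0 < a) (ha1 : a ≤ 1 / 2) (n : ℤ) (hn : 0 ≤ n) : Einf h n ≤ Einf h (n + 1 - a) := by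
  have hn' : (0 : ℝ) ≤ n := by exact_mod_cast hn
  have hpi := Real.pi_pos
  refine le_Einf_of_limits ha fun φ i j σ τ had hσ hτ hA hB hd hAm hBm => ?_
  have nint : ∀ z : ℤ, ¬ (0 < (z : ℝ) ∧ (z : ℝ) < 1) := fun z hz => by
    have h1 : 0 < z := by exact_mod_cast hz.1
    have h2 : z < 1 := by exact_mod_cast hz.2
    omega
  rcases hσ with rfl | rfl <;> rcases hτ with rfl | rfl
  · exact absurd ⟨by push_cast; linarith, by push_cast; linarith⟩ (nint (j - i - n))
  · have e' : (j : ℝ) - i = n + 1 := by linarith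
    refine fold_right h0 h1.ne had hAm hBm hA hB (2 * j - 1) (cos_int_mul_pi_ne h0 h1 _) ?_ ?_ ?_
    · gcongr; push_cast; linarith
    · gcongr; push_cast; linarith
    · push_cast; linear_combination (2 * Real.pi) * e'
  · have e : j - i - n = 0 := by
      -- This case occurs only for `α = π/2`.
      have h1 : (-1 : ℝ) < (j - i - n : ℤ) := by push_cast; linarith
      have h2 : ((j - i - n : ℤ) : ℝ) < 1 := by push_cast; linarith
      have h1' : -1 < j - i - n := by exact_mod_cast h1
      have h2' : j - i - n < 1 := by exact_mod_cast h2
      omega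
    have e' : (j : ℝ) - i - n = 0 := by exact_mod_cast e
    refine fold_right h0 h1.ne had hAm hBm hA hB (2 * j) (cos_int_mul_pi_ne h0 h1 _) ?_ ?_ ?_
    · gcongr; push_cast; linarith
    · gcongr; push_cast; linarith
    · push_cast; linear_combination (2 * Real.pi) * e'
  · exact absurd ⟨by push_cast; linarith, by push_cast; linarith⟩ (nint (j - i - n))

lemma Einf_sub_le_int {h a : ℝ} (h0 : 0 ≤ h) (h1 : h < 1) (ha : a * Real.pi = alphaParam h)
    (ha0 : 0 < a) (ha1 : a ≤ 1 / 2) (n : ℤ) (hn : 0 ≤ n) :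
    Einf h (n + 1 - a) ≤ Einf h (n + 1) := by
  have hn' : (0 : ℝ) ≤ n := by exact_mod_cast hn
  have hpi := Real.pi_pos
  refine le_Einf_of_limits ha fun φ i j σ τ had hσ hτ hA hB hd hAm hBm => ?_
  have nint : ∀ z : ℤ, ¬ (0 < (z : ℝ) ∧ (z : ℝ) < 1) := fun z hz => by
    have h1 : 0 < z := by exact_mod_cast hz.1
    have h2 : z < 1 := by exact_mod_cast hz.2
    omega
  rcases hσ with rfl | rfl <;> rcases hτ with rfl | rfl
  · have e' : (j : ℝ) - i = n + 1 := by linarith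
    refine fold_right h0 h1.ne had hAm hBm hA hB (2 * j) (cos_int_mul_pi_ne h0 h1 _) ?_ ?_ ?_
    · gcongr; push_cast; linarith
    · gcongr; push_cast; linarith
    · push_cast; linear_combination (2 * Real.pi) * e'
  · exact absurd ⟨by push_cast; linarith, by push_cast; linarith⟩ (nint (j - i - (n + 1)))
  · exact absurd ⟨by push_cast; linarith, by push_cast; linarith⟩ (nint (n + 1 - (j - i)))
  · have e' : (j : ℝ) - i = n + 1 := by linarith
    refine fold_left h0 h1.ne had hAm hBm hA hB (2 * i) (cos_int_mul_pi_ne h0 h1 _) ?_ ?_ ?_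
    · gcongr; push_cast; linarith
    · gcongr; push_cast; linarith
    · push_cast; linear_combination (2 * Real.pi) * e'

lemma Einf_add_le_int {h a : ℝ} (h0 : 0 ≤ h) (h1 : h < 1) (ha : a * Real.pi = alphaParam h)
    (ha0 : 0 < a) (ha1 : a ≤ 1 / 2) (n : ℤ) (hn : 0 ≤ n) :
    Einf h (n + a) ≤ Einf h (n + 1) := by
  have hn' : (0 : ℝ) ≤ n := by exact_mod_cast hn
  have hpi := Real.pi_pos
  refine le_Einf_of_limits ha fun φ i j σ τ had hσ hτ hA hB hd hAm hBm => ?_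
  have nint : ∀ z : ℤ, ¬ (0 < (z : ℝ) ∧ (z : ℝ) < 1) := fun z hz => by
    have h1 : 0 < z := by exact_mod_cast hz.1
    have h2 : z < 1 := by exact_mod_cast hz.2
    omega
  rcases hσ with rfl | rfl <;> rcases hτ with rfl | rfl
  · have e' : (j : ℝ) - i = n + 1 := by linarith
    refine fold_left h0 h1.ne had hAm hBm hA hB (2 * i + 1) (cos_int_mul_pi_ne h0 h1 _) ?_ ?_ ?_
    · gcongr; push_cast; linarith
    · gcongr; push_cast; linarith
    · push_cast; linear_combination (2 * Real.pi) * e'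
  · exact absurd ⟨by push_cast; linarith, by push_cast; linarith⟩ (nint (j - i - (n + 1)))
  · exact absurd ⟨by push_cast; linarith, by push_cast; linarith⟩ (nint (n + 1 - (j - i)))
  · have e' : (j : ℝ) - i = n + 1 := by linarith
    refine fold_right h0 h1.ne had hAm hBm hA hB (2 * j - 1) (cos_int_mul_pi_ne h0 h1 _) ?_ ?_ ?_
    · gcongr; push_cast; linarith
    · gcongr; push_cast; linarith
    · push_cast; linear_combination (2 * Real.pi) * e'

lemma alphaParam_eq_zero {h : ℝ} (h1 : 1 < h) : alphaParam h = 0 := by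
  simp [alphaParam, kparam, min_eq_right h1.le]

lemma Einf_int_le_succ {h : ℝ} (h0 : 0 ≤ h) (h1 : h ≠ 1) (n : ℤ) (hn : 0 ≤ n) :
    Einf h n ≤ Einf h (n + 1) := by
  rcases lt_or_gt_of_ne h1 with hh | hh
  · have ha : alphaParam h / Real.pi * Real.pi = alphaParam h :=
      div_mul_cancel₀ _ Real.pi_ne_zero
    have ha0 : 0 < alphaParam h / Real.pi := by
      refine div_pos (Real.arccos_pos.2 ?_) Real.pi_pos
      rwa [kparam, min_eq_left hh.le]
    have ha1 : alphaParam h / Real.pi ≤ 1 / 2 := by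
      rw [div_le_iff₀ Real.pi_pos]
      linarith [alphaParam_le h0]
    exact (Einf_int_le_add h0 hh ha ha0 ha1 n hn).trans (Einf_add_le_int h0 hh ha ha0 ha1 n hn)
  · have hn' : (0 : ℝ) ≤ n := by exact_mod_cast hn
    have hpi := Real.pi_pos
    refine le_Einf_of_limits (a := 0) (by rw [alphaParam_eq_zero hh, zero_mul])
      fun φ i j σ τ had hσ hτ hA hB hd hAm hBm => ?_
    obtain rfl : σ = 0 := by simpa using hσ
    obtain rfl : τ = 0 := by simpa using hτ
    have e' : (j : ℝ) - i = n + 1 := by linarith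
    refine fold_right h0 h1 had hAm hBm hA hB (2 * j - 1) (cos_odd_mul_pi_ne h0 _) ?_ ?_ ?_
    · gcongr; push_cast; linarith
    · gcongr; push_cast; linarith
    · push_cast; linear_combination (2 * Real.pi) * e'

lemma Einf_int_mono {h : ℝ} (h0 : 0 ≤ h) (h1 : h ≠ 1) {n m : ℤ} (hn : 0 ≤ n) (hnm : n ≤ m) :
    Einf h n ≤ Einf h m := by
  induction m, hnm using Int.leInduction with
  | base => exact le_rfl
  | succ k hk ih =>
    refine ih.trans ?_
    have := Einf_int_le_succ h0 h1 k (hn.trans hk)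
    exact_mod_cast this

/-- **Monotonicity of `ℰ_h`.** -/
theorem Einf_monotone (h : ℝ) (h0 : 0 ≤ h) (h1 : h ≠ 1) (d₁ d₂ : ℝ)
    (hd₁ : d₁ ∈ Dset h) (hd₂ : d₂ ∈ Dset h)
    (hd₁0 : 0 ≤ d₁) (hd₁₂ : d₁ ≤ d₂)
    (hextra : h < 1 → d₂ - d₁ ≠ 1 - 2 * alphaParam h / Real.pi) :
    Einf h d₁ ≤ Einf h d₂ := by
  rcases lt_or_gt_of_ne h1 with hh | hh
  · set a := alphaParam h / Real.pi with ha_def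
    have ha : a * Real.pi = alphaParam h := div_mul_cancel₀ _ Real.pi_ne_zero
    have ha0 : 0 < a := by
      refine div_pos (Real.arccos_pos.2 ?_) Real.pi_pos
      rwa [kparam, min_eq_left hh.le]
    have ha1 : a ≤ 1 / 2 := by
      rw [ha_def, div_le_iff₀ Real.pi_pos]
      linarith [alphaParam_le h0]
    have hne : d₂ - d₁ ≠ 1 - 2 * a := by
      have := hextra hh
      rwa [mul_div_assoc, ← ha_def] at this
    have rep : ∀ d ∈ Dset h, 0 ≤ d →
        ∃ n : ℤ, 0 ≤ n ∧ (d = n ∨ d = n + a ∨ d = n + 1 - a) := by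
      rintro d ⟨n, j, hj, hd⟩ hd0
      rw [mul_div_assoc, ← ha_def] at hd
      have pos : ∀ z : ℤ, (-1 : ℝ) < z → 0 ≤ z := fun z hz => by
        have : (-1 : ℤ) < z := by exact_mod_cast hz
        omega
      rcases hj with rfl | rfl | rfl
      · refine ⟨n - 1, pos _ ?_, Or.inr (Or.inr ?_)⟩ <;> push_cast at hd ⊢ <;> linarith
      · refine ⟨n, pos _ ?_, Or.inl ?_⟩ <;> push_cast at hd ⊢ <;> linarith
      · refine ⟨n, pos _ ?_, Or.inr (Or.inl ?_)⟩ <;> push_cast at hd ⊢ <;> linarith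
    obtain ⟨n, hn, hd1⟩ := rep d₁ hd₁ hd₁0
    obtain ⟨m, hm, hd2⟩ := rep d₂ hd₂ (hd₁0.trans hd₁₂)
    have low : Einf h m ≤ Einf h d₂ := by
      rcases hd2 with e | e | e <;> rw [e]
      · exact Einf_int_le_add h0 hh ha ha0 ha1 m hm
      · exact Einf_int_le_sub h0 hh ha ha0 ha1 m hm
    have up : Einf h d₁ ≤ Einf h (n + 1) := by
      rcases hd1 with e | e | e <;> rw [e]
      · exact Einf_int_le_succ h0 h1 n hn
      · exact Einf_add_le_int h0 hh ha ha0 ha1 n hn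
      · exact Einf_sub_le_int h0 hh ha ha0 ha1 n hn
    have far : n + 1 ≤ m → Einf h d₁ ≤ Einf h d₂ := fun hnm => by
      have := Einf_int_mono h0 h1 (by omega : 0 ≤ n + 1) hnm
      push_cast at this
      exact (up.trans this).trans low
    have hnm : n ≤ m := by
      have : (n : ℝ) < m + 1 := by
        rcases hd1 with e | e | e <;> rcases hd2 with e' | e' | e' <;> linarith
      have : n < m + 1 := by exact_mod_cast this
      omega
    rcases hnm.lt_or_eq with hlt | rfl
    · exact far (by omega)
    · -- Both winding numbers now lie in the same interval `[n, n + 1)`.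
      rcases hd1 with e | e | e
      · rw [e]; exact low
      · rcases hd2 with e' | e' | e'
        · linarith
        · rw [e, e']
        · exact absurd (by rw [e, e']; ring) hne
      · rcases hd2 with e' | e' | e'
        · linarith
        · exact (congrArg (Einf h) (by linarith : d₁ = d₂)).le
        · rw [e, e']
  · have rep : ∀ d ∈ Dset h, ∃ n : ℤ, d = n := by
      rintro d ⟨n, j, -, hd⟩
      exact ⟨n, by rw [hd, alphaParam_eq_zero hh]; simp⟩
    obtain ⟨n, rfl⟩ := rep d₁ hd₁
    obtain ⟨m, rfl⟩ := rep d₂ hd₂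
    exact Einf_int_mono h0 h1 (by exact_mod_cast hd₁0) (by exact_mod_cast hd₁₂)
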